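/- arXiv:2512.19623 — 2 statements merged into one kernel-verified Lean document; each statement's English description precedes it below -/
import Mathlib

section
/- Single-qubit stabilizer-state inversion identity: for every 2×2 complex matrix A, (1/6) · Σ_{u ∈ Q_stab} tr[A · u u*] · ( 6 · u u* − 2 · I₂ ) = A, where the sum runs over the six single-qubit stabilizer states. -/
/-!
The six projectors are `(I ± P) / 2` with `P` running over the Pauli matrices `X`, `Y`, `Z`.
The square roots enter only through `(√2)⁻¹ * (√2)⁻¹ = 1 / 2`, so the projectors have entries
in `ℚ(i)`. With them the sum is
`∑_P ∑_± (tr A ± tr (A P)) / 2 • (I ± 3 P) = 3 tr A • I + 3 ∑_P tr (A P) • P`,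
which is `6 A` by the Pauli expansion `2 A = tr A • I + ∑_P tr (A P) • P`.
Below, the identity for these explicit projectors is checked entry by entry.
-/

noncomputable section

open Matrix

/-- The six single-qubit stabilizer states
`|0⟩, |1⟩, |+⟩, |−⟩, |+i⟩, |−i⟩` in `ℂ²`. -/
def stab : Fin 6 → (Fin 2 → ℂ)
  | 0 => ![1, 0]
  | 1 => ![0, 1]
  | 2 => ![(Real.sqrt 2 : ℂ)⁻¹, (Real.sqrt 2 : ℂ)⁻¹]
  | 3 => ![(Real.sqrt 2 : ℂ)⁻¹, -(Real.sqrt 2 : ℂ)⁻¹]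
  | 4 => ![(Real.sqrt 2 : ℂ)⁻¹, Complex.I * (Real.sqrt 2 : ℂ)⁻¹]
  | 5 => ![(Real.sqrt 2 : ℂ)⁻¹, -(Complex.I * (Real.sqrt 2 : ℂ)⁻¹)]

/-- The rank-one projector `uu*` onto a vector `u ∈ ℂ²`. -/
def projVec (u : Fin 2 → ℂ) : Matrix (Fin 2) (Fin 2) ℂ :=
  Matrix.vecMulVec u (star u)

lemma inv_sqrt_two_mul_self : (Real.sqrt 2 : ℂ)⁻¹ * (Real.sqrt 2 : ℂ)⁻¹ = 1 / 2 := by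
  rw [← mul_inv, ← Complex.ofReal_mul, Real.mul_self_sqrt (by norm_num)]
  norm_num

lemma projVec_stab_zero : projVec (stab 0) = !![1, 0; 0, 0] := by
  ext i j
  fin_cases i <;> fin_cases j <;> simp [projVec, stab, vecMulVec_apply]

lemma projVec_stab_one : projVec (stab 1) = !![0, 0; 0, 1] := by
  ext i j
  fin_cases i <;> fin_cases j <;> simp [projVec, stab, vecMulVec_apply]

/-- The states other than `|0⟩` and `|1⟩` are `(1, z) / √2` for a phase `z`, here `±1` or `±i`. -/
lemma projVec_phase (z : ℂ) (hz : z * star z = 1) :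
    projVec ![(Real.sqrt 2 : ℂ)⁻¹, z * (Real.sqrt 2 : ℂ)⁻¹] =
      !![1 / 2, star z / 2; z / 2, 1 / 2] := by
  have h := inv_sqrt_two_mul_self
  ext i j
  fin_cases i <;> fin_cases j <;>
    simp [projVec, vecMulVec_apply] at hz ⊢ <;> grind

lemma projVec_stab_two : projVec (stab 2) = !![1 / 2, 1 / 2; 1 / 2, 1 / 2] := by
  simpa [stab] using projVec_phase 1 (by simp)

lemma projVec_stab_three : projVec (stab 3) = !![1 / 2, -1 / 2; -1 / 2, 1 / 2] := by
  simpa [stab] using projVec_phase (-1) (by simp)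

lemma projVec_stab_four :
    projVec (stab 4) = !![1 / 2, -Complex.I / 2; Complex.I / 2, 1 / 2] := by
  simpa [stab] using projVec_phase Complex.I (by simp)

lemma projVec_stab_five :
    projVec (stab 5) = !![1 / 2, Complex.I / 2; -Complex.I / 2, 1 / 2] := by
  simpa [stab] using projVec_phase (-Complex.I) (by simp)

/-- Single-qubit stabilizer-state inversion identity: for every `2×2` complex matrix `A`,
`(1/6) Σ_{u ∈ Q_stab} tr[A·uu*] (6·uu* − 2·I₂) = A`, the sum running over the six
single-qubit stabilizer states. -/
theorem stabilizer_inversion_single_qubit (A : Matrix (Fin 2) (Fin 2) ℂ) :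
    (6 : ℂ)⁻¹ • ∑ u : Fin 6, (A * projVec (stab u)).trace •
      ((6 : ℂ) • projVec (stab u) - (2 : ℂ) • (1 : Matrix (Fin 2) (Fin 2) ℂ)) = A := by
  have hI := Complex.I_mul_I
  simp only [Fin.sum_univ_six, projVec_stab_zero, projVec_stab_one, projVec_stab_two,
    projVec_stab_three, projVec_stab_four, projVec_stab_five]
  ext i j
  fin_cases i <;> fin_cases j <;>
    simp [Matrix.trace_fin_two, Matrix.mul_apply, Fin.sum_univ_two] <;> grind
end
end

section
/- n-qubit product-stabilizer inversion identity (unbiasedness of the tensor-product stabilizer learning protocol): for every n ≥ 1 and every 2^n × 2^n complex matrix A (indexed by bit strings), A = Σ_{u : {1,…,n} → Q_stab} 6^{−n} · tr[ A · ⊗_{s=1}^{n} u(s) u(s)* ] · ⊗_{s=1}^{n} ( 6 · u(s) u(s)* − 2 · I₂ ), where the sum runs over all 6^n assignments of single-qubit stabilizer states to the n qubits, and ⊗_{s=1}^{n} M_s denotes the 2^n × 2^n matrix indexed by bit strings f,g with entries ∏_{s=1}^n (M_s)_{f(s),g(s)}. -/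
/-!
Compare matrix entries. Expanding the trace, the coefficient of `A f g` in the `(c, d)` entry of the
right-hand side is `6⁻ⁿ ∑ᵤ ∏ₛ P_{u s} (g s) (f s) * (6 P_{u s} - 2) (c s) (d s)`, where `P_v` is the
projector onto the stabilizer state `v`. The sum over all assignments `u` factors into a product over the
qubits, and each factor is `6` if `f s = c s` and `g s = d s`, and `0` otherwise: this is the
single-qubit inversion formula, equivalent to the 2-design property `∑ᵥ P_v ⊗ P_v = 1 + SWAP`.
Hence only the term with `f = c`, `g = d` survives, with coefficient `1`.
-/

noncomputable section

open Matrix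

/-- Tensor product of an `n`-tuple of `2×2` matrices, as a `2^n × 2^n` matrix indexed by
bit strings: `(⊗_s M_s)_{f,g} = ∏_s (M_s)_{f s, g s}`. -/
def tensorPow {n : ℕ} (M : Fin n → Matrix (Fin 2) (Fin 2) ℂ) :
    Matrix (Fin n → Fin 2) (Fin n → Fin 2) ℂ :=
  Matrix.of fun f g => ∏ s, M s (f s) (g s)

/-- Single-qubit inversion in entries: the map `X ↦ ∑ᵥ tr(X P_v) (6 P_v - 2)` is `6` times the
identity; here `X` is the matrix unit at `(a, b)`. -/
lemma stab_single (a b c d : Fin 2) :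
    ∑ v : Fin 6, projVec (stab v) b a *
      ((6 : ℂ) • projVec (stab v) - (2 : ℂ) • (1 : Matrix (Fin 2) (Fin 2) ℂ)) c d
      = if a = c ∧ b = d then 6 else 0 := by
  have h : ((Real.sqrt 2 : ℂ)⁻¹) ^ 2 = 1 / 2 := by
    rw [inv_pow, ← Complex.ofReal_pow, Real.sq_sqrt (by norm_num)]
    norm_num
  have hI : Complex.I ^ 2 = -1 := Complex.I_sq
  fin_cases a <;> fin_cases b <;> fin_cases c <;> fin_cases d <;>
    simp [Fin.sum_univ_six, stab, projVec, Matrix.vecMulVec_apply, -Complex.ofReal_inv] <;>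
    generalize ((Real.sqrt 2 : ℂ))⁻¹ = r at h ⊢ <;> grind

lemma stab_tensor {n : ℕ} (f g c d : Fin n → Fin 2) :
    ∑ u : Fin n → Fin 6, (tensorPow fun s => projVec (stab (u s))) g f *
      (tensorPow fun s =>
        (6 : ℂ) • projVec (stab (u s)) - (2 : ℂ) • (1 : Matrix (Fin 2) (Fin 2) ℂ)) c d
      = if f = c ∧ g = d then 6 ^ n else 0 := by
  simp only [tensorPow, Matrix.of_apply, ← Finset.prod_mul_distrib]
  rw [← Fintype.prod_sum fun s v => projVec (stab v) (g s) (f s) *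
      ((6 : ℂ) • projVec (stab v) - (2 : ℂ) • (1 : Matrix (Fin 2) (Fin 2) ℂ)) (c s) (d s)]
  simp only [stab_single]
  split_ifs with h
  · obtain ⟨rfl, rfl⟩ := h
    simp
  · have : ∃ s, ¬(f s = c s ∧ g s = d s) := by
      by_contra! hall
      exact h ⟨funext fun s => (hall s).1, funext fun s => (hall s).2⟩
    obtain ⟨s, hs⟩ := this
    exact Finset.prod_eq_zero (Finset.mem_univ s) (if_neg hs)

/-- `n`-qubit product-stabilizer inversion identity (unbiasedness of the tensor-product
stabilizer learning protocol): for every `2^n × 2^n` complex matrix `A`,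
`A = Σ_u 6^{−n} tr[A · ⊗_s u(s)u(s)*] · ⊗_s (6·u(s)u(s)* − 2·I₂)`, the sum running over all
`6^n` assignments of single-qubit stabilizer states to the `n` qubits. -/
theorem stabilizer_inversion_n_qubit (n : ℕ) (hn : 1 ≤ n)
    (A : Matrix (Fin n → Fin 2) (Fin n → Fin 2) ℂ) :
    A = ∑ u : Fin n → Fin 6,
      ((6 : ℂ) ^ n)⁻¹ •
        ((A * tensorPow fun s => projVec (stab (u s))).trace •
          tensorPow fun s =>
            (6 : ℂ) • projVec (stab (u s)) - (2 : ℂ) • (1 : Matrix (Fin 2) (Fin 2) ℂ)) := by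
  ext c d
  simp only [Matrix.sum_apply, Matrix.smul_apply, smul_eq_mul, Matrix.trace, Matrix.diag_apply,
    Matrix.mul_apply]
  rw [← Finset.mul_sum]
  simp only [Finset.sum_mul]
  rw [Finset.sum_comm]
  conv_rhs =>
    enter [2, 2, f]
    rw [Finset.sum_comm]
    enter [2, g]
    simp only [mul_assoc]
    rw [← Finset.mul_sum, stab_tensor]
  simp only [ite_and, mul_ite, mul_zero, Finset.sum_ite_irrel, Finset.sum_const_zero,
    Finset.sum_ite_eq', Finset.mem_univ, if_true]
  field_simp
end
end
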